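/- Assume x_i b_j ∉ qᶻ for all 1 ≤ i ≤ n, 1 ≤ j ≤ n+1, and (d x_1⁻¹⋯x_n⁻¹) b_j ∉ qᶻ for all 1 ≤ j ≤ n+1. Then the series defining K(x) converges absolutely and K(x) = (1−q)ⁿ (q)_∞ⁿ (q a_1⁻¹⋯a_{n+1}⁻¹ d)_∞ (q b_1⁻¹⋯b_{n+1}⁻¹ d⁻¹)_∞ / (q a_1⁻¹⋯a_{n+1}⁻¹ b_1⁻¹⋯b_{n+1}⁻¹)_∞ · ∏_{i=1}^{n+1} ∏_{j=1}^{n+1} (q a_i⁻¹ b_j⁻¹)_∞ · (−1)ⁿ · ∏_{1≤i<j≤n} x_j θ(x_i/x_j) / ∏_{i=1}^n ∏_{j=1}^{n+1} θ(b_j x_i) · ∏_{i=1}^n x_i θ(d x_1⁻¹⋯x_n⁻¹ x_i⁻¹) / ∏_{j=1}^{n+1} θ(b_j d x_1⁻¹⋯x_n⁻¹). (Gustafson's A_n summation formula; Theorem 5.2 of the paper.) -/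

import Mathlib

/-!
The proof is an Ismail-type argument. Put `αⱼ = aⱼ⁻¹` and let `X = (x₁,…,xₙ, d/(x₁⋯xₙ))`, so that
the lattice consists of the points `zᵢ = Xᵢ q^{μᵢ}` with `μ ∈ ℤ^{n+1}`, `∑ μᵢ = 0`.

*Terminating case.* If `αⱼ = q^{Nⱼ}/Xⱼ` with `Nⱼ ∈ ℕ`, the summand vanishes unless `μᵢ ≥ -Nᵢ` for all
`i`, and with `aᵢ = Xᵢ q^{-Nᵢ}` the series is the finite sum over `zᵢ = aᵢ q^{λᵢ}`, `λ ∈ ℕ^{n+1}`,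
`|λ| = N := ∑ Nᵢ` (`tsum_terminating`). Expanding the Vandermonde determinant along a column in which
the ones are replaced by `∏ⱼ (1 - cⱼ zᵢ)` multiplies it by `1 - ∏ cⱼ ∏ zᵢ` (`sum_cof`). Using this
with `cⱼ = aⱼ⁻¹` on the level `N + 1` and with `cⱼ = bⱼ` on the level `N`, and the `q`-difference
equation of the one-variable weight, gives a first-order recursion in `N` (`tsm_succ`). Solving it
and using the quasi-periodicity of the theta factor proves the formula there (`tsm_eq_rhs`).

*Continuation.* On every polydisc `‖αⱼ‖ ≤ ρⱼ` with `q ∏ ρⱼ < ‖∏ bⱼ‖` the summand has a summable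
majorant (`exists_majorant`): the weight of one variable is bounded as `ν → ∞` and, even after
multiplication by the powers of `zᵢ` in the Vandermonde product, is `O(r^{-ν})` as `ν → -∞`, where
`r = q ∏ ρⱼ / ‖∏ bⱼ‖ < 1`; as `∑ μᵢ = 0`, the negative parts of `μ` control all of `μ`. This gives
absolute convergence and holomorphy of both sides in each `αⱼ`. The points `q^N/Xⱼ` accumulate at
`αⱼ = 0`, which lies inside the disc of holomorphy, so the identity theorem frees the `αⱼ` one after
another (`eval_of_finset`).
-/

open scoped BigOperators
open Finset

/-- The infinite q-Pochhammer symbol `(a)_∞ = ∏_{i=0}^∞ (1 - qⁱ a)`. -/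
noncomputable def qp (q a : ℂ) : ℂ := ∏' i : ℕ, (1 - q ^ i * a)

/-- The theta function `θ(a) = (a)_∞ (q/a)_∞`. -/
noncomputable def th (q a : ℂ) : ℂ := qp q a * qp q (q / a)

/-- The point `z = (x₁qᵛ¹,…,x_nqᵛⁿ, d z₁⁻¹⋯z_n⁻¹)` of the Gustafson lattice. -/
noncomputable def gz {n : ℕ} (q d : ℂ) (x : Fin n → ℂ) (ν : Fin n → ℤ) : Fin (n + 1) → ℂ :=
  Fin.snoc (fun k => x k * q ^ ν k) (d * (∏ k, x k * q ^ ν k)⁻¹)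

/-- Summand of the Jackson integral of Gustafson's `A_n` type. -/
noncomputable def gTerm {n : ℕ} (q d : ℂ) (a b : Fin (n + 1) → ℂ) (x : Fin n → ℂ)
    (ν : Fin n → ℤ) : ℂ :=
  (∏ i, ∏ j, qp q (q * (a j)⁻¹ * gz q d x ν i) / qp q (b j * gz q d x ν i)) *
    ∏ i, ∏ j ∈ Finset.Ioi i, (gz q d x ν j - gz q d x ν i)

/-- The Jackson integral of Gustafson's `A_n` type `K(x)`. -/
noncomputable def gSum {n : ℕ} (q d : ℂ) (a b : Fin (n + 1) → ℂ) (x : Fin n → ℂ) : ℂ :=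
  (1 - q) ^ n * ∑' ν : Fin n → ℤ, gTerm q d a b x ν

open Filter Topology

/-! ### Infinite products and theta functions -/

lemma qp_summable {q : ℂ} (hq : ‖q‖ < 1) (a : ℂ) : Summable fun i : ℕ => ‖-(q ^ i * a)‖ := by
  simp only [norm_neg, norm_mul, norm_pow]
  exact (summable_geometric_of_lt_one (norm_nonneg _) hq).mul_right _

lemma qp_multipliable {q : ℂ} (hq : ‖q‖ < 1) (a : ℂ) :
    Multipliable fun i : ℕ => (1 - q ^ i * a) := by
  simpa [sub_eq_add_neg] using multipliable_one_add_of_summable (qp_summable hq a)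

lemma qp_tendsto {q : ℂ} (hq : ‖q‖ < 1) (a : ℂ) :
    Tendsto (fun M => ∏ i ∈ range M, (1 - q ^ i * a)) atTop (𝓝 (qp q a)) :=
  (qp_multipliable hq a).hasProd.tendsto_prod_nat

lemma qp_step {q : ℂ} (hq : ‖q‖ < 1) (a : ℂ) : qp q a = (1 - a) * qp q (q * a) := by
  have h1 := (tendsto_add_atTop_iff_nat 1).2 (qp_tendsto hq a)
  refine tendsto_nhds_unique h1 ?_
  refine ((qp_tendsto hq (q * a)).const_mul (1 - a)).congr fun M => ?_
  rw [prod_range_succ']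
  simp only [pow_succ, pow_zero, one_mul, mul_assoc]
  ring

lemma qp_ne_zero {q : ℂ} (hq : ‖q‖ < 1) {a : ℂ} (h : ∀ i : ℕ, q ^ i * a ≠ 1) : qp q a ≠ 0 := by
  have := tprod_one_add_ne_zero_of_summable (f := fun i : ℕ => -(q ^ i * a))
    (fun i => by rw [← sub_eq_add_neg]; exact sub_ne_zero.2 (h i).symm) (qp_summable hq a)
  simpa [qp, sub_eq_add_neg] using this

lemma qp_ne_zero_of_norm_lt {q : ℂ} (hq : ‖q‖ < 1) {a : ℂ} (h : ‖a‖ < 1) : qp q a ≠ 0 := by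
  refine qp_ne_zero hq fun i hi => ?_
  have h1 : ‖q ^ i * a‖ < 1 := by
    rw [norm_mul, norm_pow]
    calc ‖q‖ ^ i * ‖a‖ ≤ 1 * ‖a‖ := by
          gcongr
          exact pow_le_one₀ (norm_nonneg _) hq.le
      _ < 1 := by simpa using h
  rw [hi] at h1
  simp at h1

/-- `(a)_∞` vanishes only on `q^{-ℕ}`, in particular not off `q^ℤ`. -/
lemma qp_ne_zero_of_zpow {q : ℂ} (hq : ‖q‖ < 1) {a : ℂ}
    (h : ∀ m : ℤ, a ≠ q ^ m) : qp q a ≠ 0 := by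
  refine qp_ne_zero hq fun i hi => h (-i) ?_
  rw [zpow_neg, zpow_natCast]
  exact eq_inv_of_mul_eq_one_right hi

lemma qp_zero (q : ℂ) : qp q 0 = 1 := by simp [qp]

lemma qp_eq_zero {q : ℂ} (hq : ‖q‖ < 1) {a : ℂ} (k : ℕ) (h : q ^ k * a = 1) : qp q a = 0 := by
  have : ∀ (k : ℕ) (a : ℂ), q ^ k * a = 1 → qp q a = 0 := by
    intro k
    induction k with
    | zero => intro a h; rw [qp_step hq]; simp at h; simp [h]
    | succ k ih => intro a h; rw [qp_step hq, ih (q * a) (by rw [← h]; ring), mul_zero]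
  exact this k a h

lemma qp_split {q : ℂ} (hq : ‖q‖ < 1) (a : ℂ) (N : ℕ) :
    qp q a = (∏ i ∈ range N, (1 - q ^ i * a)) * qp q (q ^ N * a) := by
  induction N with
  | zero => simp
  | succ N ih =>
    rw [ih, prod_range_succ, qp_step hq (q ^ N * a), pow_succ]
    ring_nf

lemma qp_differentiable {q : ℂ} (hq : ‖q‖ < 1) : Differentiable ℂ (qp q) := by
  intro a
  have hd : DifferentiableOn ℂ (qp q) (Metric.ball 0 (‖a‖ + 1)) := by
    have h := Summable.hasProdLocallyUniformlyOn_nat_one_add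
      (f := fun (i : ℕ) (w : ℂ) => -(q ^ i * w)) (K := Metric.ball 0 (‖a‖ + 1))
      Metric.isOpen_ball
      (u := fun i => ‖q‖ ^ i * (‖a‖ + 1))
      ((summable_geometric_of_lt_one (norm_nonneg _) hq).mul_right _)
      (Eventually.of_forall fun i w hw => by
        rw [norm_neg, norm_mul, norm_pow]
        gcongr
        exact (mem_ball_zero_iff.1 hw).le)
      (fun i => by fun_prop)
    have h2 := h.differentiableOn (Eventually.of_forall fun s => by
      apply DifferentiableOn.fun_finsetProd
      intro i _
      fun_prop) Metric.isOpen_ball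
    refine h2.congr fun w _ => ?_
    simp [qp, sub_eq_add_neg]
  exact hd.differentiableAt (Metric.isOpen_ball.mem_nhds (by simp))

lemma th_mul_q {q : ℂ} (hq : ‖q‖ < 1) (hq0 : q ≠ 0) {a : ℂ} (ha : a ≠ 0) :
    th q (q * a) = -a⁻¹ * th q a := by
  unfold th
  rw [qp_step hq a, show q / (q * a) = a⁻¹ by field_simp, qp_step hq a⁻¹, ← div_eq_mul_inv]
  field_simp
  ring

lemma th_inv {q : ℂ} (hq : ‖q‖ < 1) {a : ℂ} (ha : a ≠ 0) :
    th q a⁻¹ = -a⁻¹ * th q a := by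
  unfold th
  rw [qp_step hq a, show q / a⁻¹ = q * a by field_simp, qp_step hq a⁻¹, ← div_eq_mul_inv]
  field_simp
  ring

lemma th_div_q {q : ℂ} (hq : ‖q‖ < 1) (hq0 : q ≠ 0) {a : ℂ} (ha : a ≠ 0) :
    th q (a / q) = -(a / q) * th q a := by
  have h := th_mul_q hq hq0 (a := a / q) (by positivity)
  rw [mul_div_cancel₀ _ hq0] at h
  rw [h]
  field_simp

/-- On the disc `‖w‖ ≤ c` the modulus of `(w)_∞` is largest at `w = -c`. -/
lemma qp_norm_le {q : ℝ} (hq0 : 0 < q) (hq1 : q < 1) {w : ℂ} {c : ℝ} (h : ‖w‖ ≤ c) :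
    ‖qp (q : ℂ) w‖ ≤ ‖qp (q : ℂ) (-(c : ℂ))‖ := by
  have hq : ‖(q : ℂ)‖ < 1 := by simpa [abs_of_pos hq0] using hq1
  refine le_of_tendsto_of_tendsto' (qp_tendsto hq w).norm (qp_tendsto hq _).norm fun M => ?_
  rw [norm_prod, norm_prod]
  refine prod_le_prod (fun _ _ => norm_nonneg _) fun i _ => ?_
  have hc : 0 ≤ c := (norm_nonneg _).trans h
  have e : ‖(1 - (q : ℂ) ^ i * -(c : ℂ))‖ = 1 + q ^ i * c := by
    rw [show (1 - (q : ℂ) ^ i * -(c : ℂ)) = ((1 + q ^ i * c : ℝ) : ℂ) by push_cast; ring,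
      Complex.norm_real, Real.norm_of_nonneg (by positivity)]
  rw [e]
  refine (norm_sub_le _ _).trans ?_
  rw [norm_one, norm_mul, norm_pow, Complex.norm_real, Real.norm_of_nonneg hq0.le]
  gcongr

/-- As `ν → +∞` the quotient `(u qᵛ)_∞ / (y qᵛ)_∞` stays bounded, and as `ν → -∞` it is
`O(|u/y|^{-ν})`; both follow from convergence of the (normalised) quotient. -/
lemma qp_ratio_bound {q : ℂ} (hq : ‖q‖ < 1) (hq0 : q ≠ 0) {u y : ℂ} (hu : u ≠ 0) (hy0 : y ≠ 0)
    (hy : ∀ m : ℤ, y ≠ q ^ m) :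
    ∃ C : ℝ, 0 < C ∧ ∀ ν : ℤ,
      ‖qp q (u * q ^ ν) / qp q (y * q ^ ν)‖ ≤ C * (‖u‖ / ‖y‖) ^ (-ν).toNat := by
  have hqpow : Tendsto (fun k : ℕ => q ^ k) atTop (𝓝 0) := tendsto_pow_atTop_nhds_zero_of_norm_lt_one hq
  have hlim : ∀ w : ℂ, Tendsto (fun k : ℕ => qp q (w * q ^ k)) atTop (𝓝 1) := fun w => by
    have h := (qp_differentiable hq).continuous.tendsto 0
    rw [qp_zero] at h
    refine h.comp ?_
    simpa using hqpow.const_mul w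
  have h1 : Tendsto (fun k : ℕ => ‖qp q (u * q ^ k) / qp q (y * q ^ k)‖) atTop (𝓝 ‖(1 : ℂ) / 1‖) :=
    ((hlim u).div (hlim y) one_ne_zero).norm
  obtain ⟨C1, hC1⟩ := h1.bddAbove_range
  have hneg : ∀ k : ℕ, qp q (u * q ^ (-(k : ℤ))) / qp q (y * q ^ (-(k : ℤ))) =
      (u / y) ^ k * (((∏ i ∈ range k, (1 - q ^ i * (q / u))) * qp q u) /
        ((∏ i ∈ range k, (1 - q ^ i * (q / y))) * qp q y)) := by
    have key : ∀ {w : ℂ}, w ≠ 0 → ∀ k : ℕ, qp q (w * q ^ (-(k : ℤ))) =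
        (∏ i ∈ range k, (-(w / q ^ (i + 1)))) *
          ((∏ i ∈ range k, (1 - q ^ i * (q / w))) * qp q w) := by
      intro w hw k
      induction k with
      | zero => simp
      | succ k ih =>
        rw [qp_step hq, prod_range_succ, prod_range_succ]
        have e : q * (w * q ^ (-((k + 1 : ℕ) : ℤ))) = w * q ^ (-(k : ℤ)) := by
          push_cast
          rw [neg_add, zpow_add₀ hq0, zpow_neg_one]
          field_simp
        rw [e, ih, zpow_neg, zpow_natCast]
        have : (1 - w * (q ^ (k + 1))⁻¹) = -(w / q ^ (k + 1)) * (1 - q ^ k * (q / w)) := by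
          field_simp
          ring
        rw [this]
        ring
    intro k
    rw [key hu, key hy0, mul_div_mul_comm]
    congr 1
    rw [← prod_div_distrib, prod_congr rfl (g := fun _ => u / y), prod_const, card_range]
    intro i _
    field_simp
  have hne : qp q (q / y) ≠ 0 := qp_ne_zero_of_zpow hq fun m hm => hy (1 - m) (by
    rw [zpow_sub₀ hq0, zpow_one, ← hm]; field_simp)
  have hne' : qp q y ≠ 0 := qp_ne_zero_of_zpow hq hy
  have h2 := ((((qp_tendsto hq (q / u)).mul_const (qp q u)).div
    ((qp_tendsto hq (q / y)).mul_const (qp q y)) (mul_ne_zero hne hne')).norm).bddAbove_range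
  obtain ⟨C2, hC2⟩ := h2
  refine ⟨max (max C1 C2) 1, by positivity, fun ν => ?_⟩
  rcases le_total 0 ν with h | h
  · lift ν to ℕ using h
    have := hC1 ⟨ν, rfl⟩
    simp only [zpow_natCast, Int.toNat_neg_natCast, pow_zero, mul_one] at this ⊢
    exact this.trans ((le_max_left _ _).trans (le_max_left _ _))
  · obtain ⟨k, rfl⟩ : ∃ k : ℕ, ν = -(k : ℤ) := ⟨(-ν).toNat, by omega⟩
    rw [hneg, norm_mul, norm_pow, norm_div, neg_neg, Int.toNat_natCast, mul_comm]
    gcongr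
    exact (hC2 ⟨k, rfl⟩).trans ((le_max_right _ _).trans (le_max_left _ _))

/-! ### The terminating sum -/

/-- Evaluation of the determinant obtained from the Vandermonde matrix by replacing the column of
ones with `∏ⱼ (1 - cⱼ zᵢ)`: only the extreme coefficients of this polynomial contribute. -/
lemma cramer_vandermonde {n : ℕ} (c z : Fin (n + 1) → ℂ) :
    (Matrix.vandermonde z).cramer (fun i => ∏ j, (1 - c j * z i)) 0 =
      (1 - (∏ j, c j) * ∏ i, z i) * (Matrix.vandermonde z).det := by
  classical
  set P : Polynomial ℂ := ∏ j, (1 - Polynomial.C (c j) * Polynomial.X) with hP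
  have hdeg1 : ∀ j, (1 - Polynomial.C (c j) * Polynomial.X).natDegree ≤ 1 := fun j => by
    compute_degree
  have hdeg : P.natDegree < n + 1 + 1 := by
    have := Polynomial.natDegree_prod_le univ (fun j => 1 - Polynomial.C (c j) * Polynomial.X)
    rw [← hP] at this
    have h2 := sum_le_sum fun j (_ : j ∈ univ) => hdeg1 j
    simp at h2
    omega
  have h0 : P.coeff 0 = 1 := by
    simp [hP, Polynomial.coeff_zero_prod]
  have htop : P.coeff (n + 1) = (-1) ^ (n + 1) * ∏ j, c j := by
    have h := Polynomial.coeff_prod_of_natDegree_le univ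
      (fun j => 1 - Polynomial.C (c j) * Polynomial.X) 1 (fun j _ => hdeg1 j)
    simp only [card_univ, Fintype.card_fin, mul_one] at h
    rw [hP, h]
    simp [Polynomial.coeff_one, prod_neg]
  have hfun : (fun i => ∏ j, (1 - c j * z i)) =
      ∑ k ∈ range (n + 1 + 1), P.coeff k • (fun i => z i ^ k) := by
    funext i
    have : (∏ j, (1 - c j * z i)) = P.eval (z i) := by simp [hP, Polynomial.eval_prod]
    rw [this, Polynomial.eval_eq_sum_range' hdeg]
    simp
  have hcol : ∀ k : Fin (n + 1), (Matrix.vandermonde z).cramer (fun i => z i ^ (k : ℕ)) =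
      Pi.single k (Matrix.vandermonde z).det := fun k => Matrix.cramer_row_self _ _ k (fun j => rfl)
  have hlast : (Matrix.vandermonde z).cramer (fun i => z i ^ (n + 1)) 0 =
      (-1) ^ n * (∏ i, z i) * (Matrix.vandermonde z).det := by
    rw [Matrix.cramer_apply]
    have e : (Matrix.vandermonde z).updateCol 0 (fun i => z i ^ (n + 1)) =
        Matrix.of fun i j => z i * ((Matrix.vandermonde z).submatrix id (finRotate (n + 1)).symm) i j := by
      ext i j
      refine Fin.cases ?_ (fun k => ?_) j
      · have : (finRotate (n + 1)).symm 0 = Fin.last n := by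
          rw [Equiv.symm_apply_eq, finRotate_last]
        simp only [Matrix.updateCol_self, Matrix.of_apply, Matrix.submatrix_apply, this,
          Matrix.vandermonde_apply, id, Fin.val_last, pow_succ']
      · have : (finRotate (n + 1)).symm k.succ = k.castSucc := by
          rw [Equiv.symm_apply_eq, finRotate_apply, Fin.coeSucc_eq_succ]
        rw [Matrix.updateCol_ne (Fin.succ_ne_zero k)]
        simp only [Matrix.of_apply, Matrix.submatrix_apply, this,
          Matrix.vandermonde_apply, id, Fin.val_castSucc, Fin.val_succ, pow_succ']
    rw [e, Matrix.det_mul_column, Matrix.det_permute', Equiv.Perm.sign_symm, sign_finRotate]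
    simp
    ring
  rw [hfun, map_sum, Finset.sum_apply, sum_range_succ, sum_range_succ', sum_eq_zero]
  · rw [map_smul, map_smul, Pi.smul_apply, Pi.smul_apply, h0, htop, hlast]
    have := hcol 0
    simp only [Fin.val_zero] at this
    rw [this, Pi.single_eq_same]
    have hs : ((-1 : ℂ) ^ n) * (-1) ^ n = 1 := by rw [← mul_pow]; simp
    simp only [smul_eq_mul, zero_add, one_mul, pow_succ]
    linear_combination (-(∏ j, c j) * (∏ i, z i) * (Matrix.vandermonde z).det) * hs
  · intro k hk
    rw [mem_range] at hk
    have := hcol ⟨k + 1, by omega⟩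
    simp only at this
    rw [map_smul, Pi.smul_apply, this, Pi.single_eq_of_ne, smul_zero]
    simp [Fin.ext_iff]

/-- The one-variable weight `g(w) = ∏ⱼ (q αⱼ w)_∞ / (bⱼ w)_∞`. -/
noncomputable def wt {m : ℕ} (q : ℂ) (α b : Fin m → ℂ) (w : ℂ) : ℂ :=
  ∏ j, qp q (q * α j * w) / qp q (b j * w)

lemma wt_shift {m : ℕ} {q : ℂ} (hq : ‖q‖ < 1) (α b : Fin m → ℂ) {w : ℂ} (hw : ∀ j, b j * w ≠ 1) :
    wt q α b (q * w) * ∏ j, (1 - α j * (q * w)) = wt q α b w * ∏ j, (1 - b j * w) := by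
  unfold wt
  rw [← prod_mul_distrib, ← prod_mul_distrib]
  refine prod_congr rfl fun j _ => ?_
  rw [qp_step hq (q * α j * w), qp_step hq (b j * w), show q * (q * α j * w) = q * α j * (q * w) by ring,
    show q * (b j * w) = b j * (q * w) by ring]
  have : 1 - b j * w ≠ 0 := sub_ne_zero.2 (hw j).symm
  rw [mul_div_mul_comm, mul_right_comm ((1 - q * α j * w) / (1 - b j * w)),
    div_mul_cancel₀ _ this]
  ring

/-- The Gustafson summand as a function of `z`, with `αⱼ = aⱼ⁻¹`. -/
noncomputable def phi {m : ℕ} (q : ℂ) (α b : Fin m → ℂ) (z : Fin m → ℂ) : ℂ :=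
  (∏ i, wt q α b (z i)) * ∏ i, ∏ j ∈ Ioi i, (z j - z i)

/-- The cofactor of the `i`-th entry of the column of ones in the Vandermonde matrix; it does not
involve `z i`. -/
noncomputable def cof {n : ℕ} (z : Fin (n + 1) → ℂ) (i : Fin (n + 1)) : ℂ :=
  (-1) ^ (i : ℕ) * (Matrix.of fun r s : Fin n => z (i.succAbove r) ^ ((s : ℕ) + 1)).det

lemma cof_update {n : ℕ} (z : Fin (n + 1) → ℂ) (i : Fin (n + 1)) (w : ℂ) :
    cof (Function.update z i w) i = cof z i := by
  simp [cof, Fin.succAbove_ne]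

lemma sum_cof {n : ℕ} (c z : Fin (n + 1) → ℂ) :
    ∑ i, (∏ j, (1 - c j * z i)) * cof z i =
      (1 - (∏ j, c j) * ∏ i, z i) * ∏ i, ∏ j ∈ Ioi i, (z j - z i) := by
  rw [← Matrix.det_vandermonde, ← cramer_vandermonde, Matrix.cramer_apply,
    Matrix.det_succ_column_zero]
  refine sum_congr rfl fun i _ => ?_
  rw [Matrix.updateCol_self, cof]
  have : ((Matrix.vandermonde z).updateCol 0 fun i => ∏ j, (1 - c j * z i)).submatrix i.succAbove Fin.succ
      = Matrix.of fun r s : Fin n => z (i.succAbove r) ^ ((s : ℕ) + 1) := by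
    ext r s
    simp [Matrix.vandermonde_apply]
  rw [this]
  ring

/-- The terminating sum over `λ ∈ ℕ^{n+1}`, `|λ| = N`, at `zᵢ = aᵢ q^{λᵢ}`. -/
noncomputable def tsm {n : ℕ} (q : ℂ) (a b : Fin (n + 1) → ℂ) (N : ℕ) : ℂ :=
  ∑ l ∈ finAntidiagonal (n + 1) N, phi q (fun j => (a j)⁻¹) b (fun i => a i * q ^ l i)

/-- First-order recursion of the terminating sum. By `sum_cof` the two sides are the sums of
`∏ₖ g(zₖ) · ∏ⱼ (1 - zᵢ/aⱼ) · cof z i` over `i` and `|λ| = N + 1`, and of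
`∏ₖ g(zₖ) · ∏ⱼ (1 - bⱼ zᵢ) · cof z i` over `i` and `|λ| = N`. For each `i` these agree term by term under
`λᵢ ↦ λᵢ + 1`; the terms with `λᵢ = 0` in the former vanish because `zᵢ = aᵢ`. -/
lemma tsm_succ {n : ℕ} {q : ℂ} (hq : ‖q‖ < 1) {a b : Fin (n + 1) → ℂ}
    (ha : ∀ i, a i ≠ 0) (hab : ∀ i j (k : ℕ), b j * (a i * q ^ k) ≠ 1) (N : ℕ) :
    (1 - q ^ (N + 1)) * tsm q a b (N + 1) =
      (1 - (∏ j, a j) * (∏ j, b j) * q ^ N) * tsm q a b N := by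
  classical
  set α : Fin (n + 1) → ℂ := fun j => (a j)⁻¹ with hα
  set Z : (Fin (n + 1) → ℕ) → Fin (n + 1) → ℂ := fun l i => a i * q ^ l i with hZ
  have hA : ∏ j, a j ≠ 0 := prod_ne_zero_iff.2 fun j _ => ha j
  have hprod : ∀ M, ∀ l ∈ finAntidiagonal (n + 1) M, ∏ i, Z l i = (∏ j, a j) * q ^ M := by
    intro M l hl
    rw [mem_finAntidiagonal] at hl
    simp only [hZ, prod_mul_distrib, prod_pow_eq_pow_sum, hl]
  have hL : (1 - q ^ (N + 1)) * tsm q a b (N + 1) = ∑ i, ∑ l ∈ finAntidiagonal (n + 1) (N + 1),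
      (∏ k, wt q α b (Z l k)) * ((∏ j, (1 - α j * Z l i)) * cof (Z l) i) := by
    rw [sum_comm, tsm, mul_sum]
    refine sum_congr rfl fun l hl => ?_
    rw [← mul_sum, sum_cof, hprod _ l hl, phi]
    have : (∏ j, α j) * ((∏ j, a j) * q ^ (N + 1)) = q ^ (N + 1) := by
      rw [hα, prod_inv_distrib]; field_simp
    rw [this]
    ring
  have hR : (1 - (∏ j, a j) * (∏ j, b j) * q ^ N) * tsm q a b N =
      ∑ i, ∑ l ∈ finAntidiagonal (n + 1) N,
      (∏ k, wt q α b (Z l k)) * ((∏ j, (1 - b j * Z l i)) * cof (Z l) i) := by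
    rw [sum_comm, tsm, mul_sum]
    refine sum_congr rfl fun l hl => ?_
    rw [← mul_sum, sum_cof, hprod _ l hl, phi]
    ring
  rw [hL, hR]
  refine sum_congr rfl fun i _ => ?_
  symm
  refine sum_of_injOn (fun l => Function.update l i (l i + 1)) ?_ ?_ ?_ ?_
  · intro l _ l' _ h
    funext k
    have hk := congrFun h k
    by_cases hki : k = i
    · subst hki; simpa using hk
    · simpa [hki] using hk
  · intro l hl
    simp only [mem_coe, mem_finAntidiagonal] at hl ⊢
    rw [sum_update_of_mem (mem_univ i), sdiff_singleton_eq_erase, ← hl, ← add_sum_erase univ l (mem_univ i)]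
    ring
  · intro l hl hnot
    have hli : l i = 0 := by
      by_contra h0
      refine hnot ⟨Function.update l i (l i - 1), ?_, ?_⟩
      · simp only [mem_coe, mem_finAntidiagonal] at hl ⊢
        rw [sum_update_of_mem (mem_univ i), sdiff_singleton_eq_erase]
        rw [← add_sum_erase univ l (mem_univ i)] at hl
        omega
      · funext k
        by_cases hki : k = i
        · subst hki; simp; omega
        · simp [hki]
    have : (∏ j, (1 - α j * Z l i)) = 0 :=
      prod_eq_zero (mem_univ i) (by simp [hα, hZ, hli, ha i])
    rw [this]
    ring
  · intro l _
    have hup : Z (Function.update l i (l i + 1)) = Function.update (Z l) i (q * Z l i) := by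
      funext k
      by_cases hki : k = i
      · subst hki; simp [hZ, pow_succ]; ring
      · simp [hZ, hki]
    simp only [hup, cof_update, Function.update_self]
    rw [← mul_assoc, ← mul_assoc]
    congr 1
    rw [← mul_prod_erase univ _ (mem_univ i), ← mul_prod_erase univ (fun k => wt q α b (Function.update (Z l) i (q * Z l i) k)) (mem_univ i)]
    have he : ∏ k ∈ univ.erase i, wt q α b (Function.update (Z l) i (q * Z l i) k) =
        ∏ k ∈ univ.erase i, wt q α b (Z l k) :=
      prod_congr rfl fun k hk => by rw [Function.update_of_ne (ne_of_mem_erase hk)]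
    rw [he, Function.update_self]
    have := wt_shift hq α b (w := Z l i) (fun j => hab i j (l i))
    linear_combination (-∏ k ∈ univ.erase i, wt q α b (Z l k)) * this

lemma tsm_eq {n : ℕ} {q : ℂ} (hq : ‖q‖ < 1) {a b : Fin (n + 1) → ℂ}
    (ha : ∀ i, a i ≠ 0) (hab : ∀ i j (k : ℕ), b j * (a i * q ^ k) ≠ 1) (N : ℕ) :
    (∏ k ∈ range N, (1 - q ^ (k + 1))) * tsm q a b N =
      (∏ k ∈ range N, (1 - (∏ j, a j) * (∏ j, b j) * q ^ k)) * phi q (fun j => (a j)⁻¹) b a := by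
  induction N with
  | zero =>
    have : finAntidiagonal (n + 1) 0 = {0} := by
      ext l
      simp [funext_iff]
    simp [tsm, this]
  | succ N ih =>
    rw [prod_range_succ, prod_range_succ]
    linear_combination (∏ k ∈ range N, (1 - q ^ (k + 1))) * tsm_succ hq ha hab N +
      (1 - (∏ j, a j) * (∏ j, b j) * q ^ N) * ih

/-! ### Theta factor and the terminating evaluation -/

/-- The theta-function factor of the summation formula, written symmetrically in all `n + 1`
variables. -/
noncomputable def thPart {m : ℕ} (q : ℂ) (b X : Fin m → ℂ) : ℂ :=
  (∏ i, ∏ j ∈ Ioi i, X j * th q (X i / X j)) / ∏ i, ∏ j, th q (b j * X i)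

lemma prod_Ioi_castSucc {n : ℕ} (f : Fin (n + 1) → Fin (n + 1) → ℂ) :
    ∏ i, ∏ j ∈ Ioi i, f i j =
      (∏ i : Fin n, ∏ j ∈ Ioi i, f i.castSucc j.castSucc) *
        ∏ i : Fin n, f i.castSucc (Fin.last n) := by
  have h : ∀ {m : ℕ} (g : Fin m → ℂ) (i : Fin m), ∏ j ∈ Ioi i, g j = ∏ j, if i < j then g j else 1 := by
    intro m g i
    rw [← prod_filter]
    congr 1
    ext j
    simp
  simp only [h]
  rw [Fin.prod_univ_castSucc, ← prod_mul_distrib]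
  have : (∏ j, if Fin.last n < j then f (Fin.last n) j else 1) = 1 :=
    prod_eq_one fun j _ => by rw [if_neg (Fin.le_last j).not_gt]
  rw [this, mul_one]
  refine prod_congr rfl fun i _ => ?_
  rw [Fin.prod_univ_castSucc]
  simp [Fin.castSucc_lt_last]

/-- A product over pairs `i < j` of a factor that is `r` of the other index when one of the two
indices is `l`, and `1` otherwise. -/
lemma prod_pairs_single {m : ℕ} (r : Fin m → ℂ) (l : Fin m) :
    ∏ i, ∏ j ∈ Ioi i, ((if i = l then r j else 1) * (if j = l then r i else 1)) =
      ∏ i ∈ univ.erase l, r i := by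
  simp only [prod_mul_distrib]
  have h1 : ∏ i, ∏ j ∈ Ioi i, (if i = l then r j else 1) = ∏ j ∈ Ioi l, r j := by
    rw [prod_eq_single l]
    · simp
    · intro i _ hi; simp [hi]
    · simp
  have h2 : ∏ i, ∏ j ∈ Ioi i, (if j = l then r i else 1) = ∏ i ∈ Iio l, r i := by
    have : Iio l = univ.filter fun i => i < l := by ext; simp
    rw [this, prod_filter]
    refine prod_congr rfl fun i _ => ?_
    rw [prod_ite_eq' (Ioi i) l (fun _ => r i)]
    simp
  rw [h1, h2, ← prod_union]
  · congr 1
    ext i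
    simp [lt_or_lt_iff_ne, ne_comm]
  · rw [disjoint_left]
    intro i
    simp only [mem_Ioi, mem_Iio]
    exact fun h h' => lt_asymm h h'

/-- Quasi-periodicity: multiplying a single variable by `q` changes the theta factor by
`-(∏ b)(∏ X)`, irrespective of which variable it is. -/
lemma thPart_shift {m : ℕ} {q : ℂ} (hq : ‖q‖ < 1) (hq0 : q ≠ 0) {b X : Fin m → ℂ}
    (hb : ∀ j, b j ≠ 0) (hX : ∀ i, X i ≠ 0) (l : Fin m) :
    thPart q b (Function.update X l (q * X l)) =
      -((∏ j, b j) * ∏ i, X i) * thPart q b X := by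
  classical
  set Y := Function.update X l (q * X l) with hY
  have hYl : Y l = q * X l := by simp [hY]
  have hYn : ∀ i, i ≠ l → Y i = X i := fun i hi => by simp [hY, hi]
  have hnum : ∏ i, ∏ j ∈ Ioi i, Y j * th q (Y i / Y j) =
      (∏ i, ∏ j ∈ Ioi i, X j * th q (X i / X j)) * ∏ i ∈ univ.erase l, (-(X i / X l)) := by
    rw [← prod_pairs_single (fun i => -(X i / X l)) l]
    simp only [← prod_mul_distrib]
    refine prod_congr rfl fun i _ => prod_congr rfl fun j hj => ?_
    have hij : i ≠ j := (mem_Ioi.1 hj).ne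
    have hXj := hX j
    have hXi := hX i
    have hXl := hX l
    by_cases hi : i = l
    · subst hi
      rw [hYl, hYn j hij.symm, mul_div_assoc, th_mul_q hq hq0 (div_ne_zero hXi hXj)]
      simp only [if_true, if_neg hij.symm]
      field_simp
    · by_cases hjl : j = l
      · subst hjl
        rw [hYl, hYn i hij, show X i / (q * X j) = X i / X j / q by field_simp,
          th_div_q hq hq0 (div_ne_zero hXi hXj)]
        simp only [if_true, if_neg hij]
        field_simp
      · rw [hYn i hi, hYn j hjl]
        simp [hi, hjl]
  have hden : ∏ i, ∏ j, th q (b j * Y i) =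
      (∏ j, (-(b j * X l)⁻¹)) * ∏ i, ∏ j, th q (b j * X i) := by
    rw [← mul_prod_erase univ _ (mem_univ l), ← mul_prod_erase univ
      (fun i => ∏ j, th q (b j * X i)) (mem_univ l), ← mul_assoc, ← prod_mul_distrib]
    congr 1
    · refine prod_congr rfl fun j _ => ?_
      rw [hYl, mul_left_comm, th_mul_q hq hq0 (mul_ne_zero (hb j) (hX l))]
    · refine prod_congr rfl fun i hi => ?_
      rw [hYn i (ne_of_mem_erase hi)]
  have hXl := hX l
  have hfac : (∏ i ∈ univ.erase l, (-(X i / X l))) / (∏ j, (-(b j * X l)⁻¹)) =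
      -((∏ j, b j) * ∏ i, X i) := by
    rw [div_eq_mul_inv, ← prod_inv_distrib, ← mul_prod_erase univ (fun j => (-(b j * X l)⁻¹)⁻¹)
      (mem_univ l), mul_left_comm, ← prod_mul_distrib, ← mul_prod_erase univ b (mem_univ l),
      ← mul_prod_erase univ X (mem_univ l), mul_mul_mul_comm, ← prod_mul_distrib,
      prod_congr rfl (g := fun i => b i * X i)]
    · field_simp
    · intro i _
      have := hb i
      field_simp
  rw [thPart, hnum, hden, mul_comm (∏ j, (-(b j * X l)⁻¹)), mul_div_mul_comm, hfac, thPart]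
  ring

lemma thPart_lattice {m : ℕ} {q : ℂ} (hq : ‖q‖ < 1) (hq0 : q ≠ 0) {a b : Fin m → ℂ}
    (ha : ∀ i, a i ≠ 0) (hb : ∀ j, b j ≠ 0) (N : ℕ) :
    ∀ l : Fin m → ℕ, ∑ i, l i = N → thPart q b (fun i => a i * q ^ l i) =
      (∏ k ∈ range N, (-((∏ j, a j) * (∏ j, b j) * q ^ k))) * thPart q b a := by
  classical
  induction N with
  | zero =>
    intro l hl
    have : l = 0 := by funext i; simpa using (sum_eq_zero_iff.1 hl) i (mem_univ i)
    simp [this]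
  | succ N ih =>
    intro l hl
    obtain ⟨s, -, hs⟩ : ∃ s ∈ univ, l s ≠ 0 := exists_ne_zero_of_sum_ne_zero (by rw [hl]; simp)
    set l' := Function.update l s (l s - 1) with hl'
    have hsum : ∑ i, l' i = N := by
      rw [hl', sum_update_of_mem (mem_univ s), sdiff_singleton_eq_erase]
      rw [← add_sum_erase univ l (mem_univ s)] at hl
      omega
    have hup : (fun i => a i * q ^ l i) =
        Function.update (fun i => a i * q ^ l' i) s (q * (a s * q ^ l' s)) := by
      funext k
      by_cases hk : k = s
      · subst hk
        obtain ⟨t, ht⟩ := Nat.exists_eq_succ_of_ne_zero hs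
        simp [hl', ht, pow_succ]
        ring
      · simp [hl', hk]
    rw [hup, thPart_shift hq hq0 hb (fun i => mul_ne_zero (ha i) (pow_ne_zero _ hq0)) s,
      ih l' hsum, prod_range_succ, prod_mul_distrib, prod_pow_eq_pow_sum, hsum]
    ring

/-- The right-hand side of the summation formula without the factor `(1 - q)ⁿ`, in terms of
`αⱼ = aⱼ⁻¹` and the full vector `X` of `n + 1` variables. -/
noncomputable def rhs {n : ℕ} (q d : ℂ) (α b X : Fin (n + 1) → ℂ) : ℂ :=
  qp q q ^ n * (qp q (q * (∏ j, α j) * d) * qp q (q * (∏ j, b j)⁻¹ * d⁻¹) /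
    qp q (q * (∏ j, α j) * (∏ j, b j)⁻¹)) *
    (∏ i, ∏ j, qp q (q * α i * (b j)⁻¹)) * thPart q b X

/-- The value at `z = a`, which is the only term of the terminating sum for `N = 0`. -/
lemma phi_self {n : ℕ} {q : ℂ} (hq : ‖q‖ < 1) (hq0 : q ≠ 0) {a b : Fin (n + 1) → ℂ}
    (ha : ∀ i, a i ≠ 0) (hab : ∀ i j (m : ℤ), b j * a i ≠ q ^ m) :
    phi q (fun j => (a j)⁻¹) b a =
      qp q q ^ (n + 1) * (∏ i, ∏ j, qp q (q * (a i)⁻¹ * (b j)⁻¹)) * thPart q b a := by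
  have hden : ∀ i j, qp q (q * (a i)⁻¹ * (b j)⁻¹) ≠ 0 := fun i j =>
    qp_ne_zero_of_zpow hq fun m hm => hab i j (1 - m) (by
      rw [zpow_sub₀ hq0, zpow_one, ← hm]
      have := ha i
      by_cases hb : b j = 0
      · simp [hb]
      · field_simp)
  have hnum : ∏ i, ∏ j, qp q (q * (a j)⁻¹ * a i) =
      qp q q ^ (n + 1) * ∏ i, ∏ j ∈ Ioi i, (qp q (q * (a i / a j)) * qp q (q * (a j / a i))) := by
    have h := prod_prod_Ioi_mul_eq_prod_prod_off_diag (fun i j => qp q (q * (a j / a i)))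
    have hp : qp q q ^ (n + 1) = ∏ _i : Fin (n + 1), qp q q := by simp
    rw [h, hp, ← prod_mul_distrib]
    refine prod_congr rfl fun i _ => ?_
    have e : ({i} : Finset (Fin (n + 1)))ᶜ = univ.erase i := by ext; simp
    rw [← mul_prod_erase univ _ (mem_univ i), e]
    congr 1
    · rw [mul_assoc, inv_mul_cancel₀ (ha i), mul_one]
    · refine prod_congr rfl fun j _ => ?_
      congr 1
      ring
  have hth : ∏ i, ∏ j ∈ Ioi i, a j * th q (a i / a j) =
      (∏ i, ∏ j ∈ Ioi i, (qp q (q * (a i / a j)) * qp q (q * (a j / a i)))) *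
        ∏ i, ∏ j ∈ Ioi i, (a j - a i) := by
    simp only [← prod_mul_distrib]
    refine prod_congr rfl fun i _ => prod_congr rfl fun j _ => ?_
    have hi := ha i
    have hj := ha j
    rw [th, qp_step hq (a i / a j), show q / (a i / a j) = q * (a j / a i) by field_simp]
    field_simp
  have hthd : ∏ i, ∏ j, th q (b j * a i) = (∏ i, ∏ j, qp q (b j * a i)) *
      ∏ i, ∏ j, qp q (q * (a i)⁻¹ * (b j)⁻¹) := by
    simp only [← prod_mul_distrib]
    refine prod_congr rfl fun i _ => prod_congr rfl fun j _ => ?_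
    rw [th]
    congr 2
    rw [div_eq_mul_inv, mul_inv]
    ring
  have hE : (∏ i, ∏ j, qp q (q * (a i)⁻¹ * (b j)⁻¹)) ≠ 0 :=
    prod_ne_zero_iff.2 fun i _ => prod_ne_zero_iff.2 fun j _ => hden i j
  simp only [phi, wt, thPart, prod_div_distrib]
  rw [hnum, hth, hthd]
  generalize (∏ i, ∏ j, qp q (q * (a i)⁻¹ * (b j)⁻¹)) = E at *
  field_simp

/-- The summation formula in the terminating case. Any point `X = (aᵢ q^{lᵢ})` with `|l| = N` may be
used on the right-hand side, whose theta factor depends on `l` only through `N`. -/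
lemma tsm_eq_rhs {n : ℕ} {q : ℂ} (hq : ‖q‖ < 1) (hq0 : q ≠ 0) {a b : Fin (n + 1) → ℂ}
    (ha : ∀ i, a i ≠ 0) (hb : ∀ i, b i ≠ 0) (hab : ∀ i j (m : ℤ), b j * a i ≠ q ^ m)
    (hbal : ‖q * (∏ j, (a j)⁻¹) * (∏ j, b j)⁻¹‖ < 1)
    (l : Fin (n + 1) → ℕ) (N : ℕ) (hl : ∑ i, l i = N) :
    tsm q a b N = rhs q ((∏ j, a j) * q ^ N) (fun j => (a j)⁻¹) b (fun i => a i * q ^ l i) := by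
  have hA : ∏ j, a j ≠ 0 := prod_ne_zero_iff.2 fun j _ => ha j
  have hB : ∏ j, b j ≠ 0 := prod_ne_zero_iff.2 fun j _ => hb j
  have hqN : ∏ k ∈ range N, (1 - q ^ (k + 1)) ≠ 0 := by
    refine prod_ne_zero_iff.2 fun k _ h => ?_
    have h1 : ‖q ^ (k + 1)‖ < 1 := by
      rw [norm_pow]; exact pow_lt_one₀ (norm_nonneg _) hq (by simp)
    rw [← sub_eq_zero.1 h] at h1
    simp at h1
  have hD := qp_ne_zero_of_norm_lt hq hbal
  have hT := tsm_eq hq ha (b := b) (fun i j k h => hab i j (-k) (by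
    rw [zpow_neg, zpow_natCast]
    exact eq_inv_of_mul_eq_one_left (by rw [mul_assoc]; exact h))) N
  have e1 : qp q q = (∏ k ∈ range N, (1 - q ^ (k + 1))) *
      qp q (q * (∏ j, (a j)⁻¹) * ((∏ j, a j) * q ^ N)) := by
    rw [qp_split hq q N]
    congr 2
    rw [prod_inv_distrib]
    field_simp
  have e2 : qp q (q * (∏ j, b j)⁻¹ * ((∏ j, a j) * q ^ N)⁻¹) *
      (∏ k ∈ range N, (-((∏ j, a j) * (∏ j, b j) * q ^ k))) =
      (∏ k ∈ range N, (1 - (∏ j, a j) * (∏ j, b j) * q ^ k)) *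
        qp q (q * (∏ j, (a j)⁻¹) * (∏ j, b j)⁻¹) := by
    rw [prod_inv_distrib]
    clear * - hq hq0 hA hB
    induction N with
    | zero => simp; ring_nf
    | succ N ih =>
      rw [qp_step hq, show q * (q * (∏ j, b j)⁻¹ * ((∏ j, a j) * q ^ (N + 1))⁻¹) =
        q * (∏ j, b j)⁻¹ * ((∏ j, a j) * q ^ N)⁻¹ by field_simp; ring, prod_range_succ, prod_range_succ]
      have : (1 - q * (∏ j, b j)⁻¹ * ((∏ j, a j) * q ^ (N + 1))⁻¹) *
          (-((∏ j, a j) * (∏ j, b j) * q ^ N)) = 1 - (∏ j, a j) * (∏ j, b j) * q ^ N := by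
        field_simp
        ring
      linear_combination (1 - (∏ j, a j) * (∏ j, b j) * q ^ N) * ih +
        (qp q (q * (∏ j, b j)⁻¹ * ((∏ j, a j) * q ^ N)⁻¹) *
          ∏ k ∈ range N, (-((∏ j, a j) * (∏ j, b j) * q ^ k))) * this
  rw [phi_self hq hq0 ha hab] at hT
  apply mul_left_cancel₀ hqN
  rw [hT, rhs, thPart_lattice hq hq0 ha hb N l hl]
  set T := thPart q b a
  set W := ∏ i, ∏ j, qp q (q * (a i)⁻¹ * (b j)⁻¹)
  generalize qp q (q * (∏ j, (a j)⁻¹) * (∏ j, b j)⁻¹) = U at *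
  generalize qp q (q * (∏ j, b j)⁻¹ * ((∏ j, a j) * q ^ N)⁻¹) = V at *
  generalize qp q (q * (∏ j, (a j)⁻¹) * ((∏ j, a j) * q ^ N)) = S at *
  set R1 := ∏ k ∈ range N, (-((∏ j, a j) * (∏ j, b j) * q ^ k))
  set R2 := ∏ k ∈ range N, (1 - (∏ j, a j) * (∏ j, b j) * q ^ k)
  set R3 := ∏ k ∈ range N, (1 - q ^ (k + 1))
  apply mul_right_cancel₀ hD
  rw [show R3 * (qp q q ^ n * (S * V / U) * W * (R1 * T)) * U =
    R3 * (qp q q ^ n * (S * V) * W * (R1 * T)) by field_simp, pow_succ]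
  linear_combination (R2 * qp q q ^ n * W * T * U) * e1 - (qp q q ^ n * R3 * S * W * T) * e2

/-! ### A summable majorant -/

/-- The exponent vector `(ν₁,…,νₙ,-∑ν)` of the `n + 1` variables; its entries sum to zero. -/
def mu {n : ℕ} (ν : Fin n → ℤ) : Fin (n + 1) → ℤ := Fin.snoc ν (-∑ k, ν k)

lemma mu_castSucc {n : ℕ} (ν : Fin n → ℤ) (k : Fin n) : mu ν k.castSucc = ν k := by simp [mu]

lemma mu_last {n : ℕ} (ν : Fin n → ℤ) : mu ν (Fin.last n) = -∑ k, ν k := by simp [mu]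

lemma sum_mu {n : ℕ} (ν : Fin n → ℤ) : ∑ i, mu ν i = 0 := by
  rw [Fin.sum_univ_castSucc, mu_last]
  simp [mu_castSucc]

lemma summable_pi_prod {ι : Type*} {f : ι → ℝ} (hf : Summable f) (h0 : ∀ i, 0 ≤ f i) (n : ℕ) :
    Summable fun ν : Fin n → ι => ∏ k, f (ν k) := by
  induction n with
  | zero => exact Summable.of_finite
  | succ n ih =>
    rw [← (Fin.consEquiv (fun _ : Fin (n + 1) => ι)).summable_iff]
    refine (hf.mul_of_nonneg ih h0 fun ν => prod_nonneg fun k _ => h0 _).congr fun p => ?_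
    simp [Fin.prod_univ_succ, Fin.consEquiv]

lemma summable_pow_natAbs {s : ℝ} (h0 : 0 ≤ s) (h1 : s < 1) :
    Summable fun ν : ℤ => s ^ ν.natAbs := by
  refine Summable.of_nat_of_neg ?_ ?_ <;> simpa using summable_geometric_of_lt_one h0 h1

/-- Since the entries of `mu ν` sum to zero, their negative parts account for half of `∑ |μᵢ|`. -/
lemma sum_natAbs_le {n : ℕ} (ν : Fin n → ℤ) :
    ∑ k, (ν k).natAbs ≤ 2 * ∑ i, (-mu ν i).toNat := by
  have h : ((2 * ∑ i, (-mu ν i).toNat : ℕ) : ℤ) = ∑ i, ((mu ν i).natAbs : ℤ) := by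
    rw [← add_zero (∑ i, ((mu ν i).natAbs : ℤ)), ← sum_mu ν, ← sub_eq_iff_eq_add', Nat.cast_mul,
      Nat.cast_sum, mul_sum, ← sum_sub_distrib]
    rw [← neg_inj, ← sum_neg_distrib, ← sum_neg_distrib]
    have h0 := sum_mu ν
    rw [← neg_eq_zero, ← sum_neg_distrib] at h0
    rw [h0, ← sum_mu ν]
    refine sum_congr rfl fun i _ => ?_
    omega
  have h2 : ((∑ k, (ν k).natAbs : ℕ) : ℤ) ≤ ∑ i, ((mu ν i).natAbs : ℤ) := by
    rw [Fin.sum_univ_castSucc]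
    simp only [mu_castSucc]
    push_cast
    have : 0 ≤ ((mu ν (Fin.last n)).natAbs : ℤ) := by positivity
    push_cast at this
    linarith
  rw [← h] at h2
  exact_mod_cast h2

/-- Bound on a single variable, uniform in `‖αⱼ‖ ≤ ρⱼ`: with `r = q ∏ ρⱼ / ‖∏ bⱼ‖`, the weight at
`z = x q^ν` times a power `zᵏ`, `k ≤ n`, is bounded as `ν → ∞` and `O(r^{-ν})` as `ν → -∞`. The weight
alone is `O((qⁿ r)^{-ν})`, and the factor `qⁿ` absorbs the power of `z`. -/
lemma wt_bound {n : ℕ} {q : ℝ} (hq0 : 0 < q) (hq1 : q < 1) {b : Fin (n + 1) → ℂ}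
    (hb : ∀ j, b j ≠ 0) {x : ℂ} (hx : x ≠ 0) (hbx : ∀ j (m : ℤ), b j * x ≠ (q : ℂ) ^ m)
    {ρ : Fin (n + 1) → ℝ} (hρ : ∀ j, 0 < ρ j) :
    ∃ C : ℝ, 0 < C ∧ ∀ α : Fin (n + 1) → ℂ, (∀ j, ‖α j‖ ≤ ρ j) → ∀ k ≤ n, ∀ ν : ℤ,
      ‖wt (q : ℂ) α b (x * (q : ℂ) ^ ν)‖ * ‖x * (q : ℂ) ^ ν‖ ^ k ≤
        C * (q * (∏ j, ρ j) / ‖∏ j, b j‖) ^ (-ν).toNat := by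
  have hq : ‖(q : ℂ)‖ < 1 := by simpa [abs_of_pos hq0] using hq1
  have hqc : (q : ℂ) ≠ 0 := by exact_mod_cast hq0.ne'
  have hnx : 0 < ‖x‖ := norm_pos_iff.2 hx
  have hnb : ∀ j, 0 < ‖b j‖ := fun j => norm_pos_iff.2 (hb j)
  have hu : ∀ j, (-((q * ρ j * ‖x‖ : ℝ) : ℂ)) ≠ 0 := fun j => by
    have := hρ j
    rw [neg_ne_zero, Complex.ofReal_ne_zero]
    positivity
  choose C hC0 hC using fun j => qp_ratio_bound hq hqc (hu j) (mul_ne_zero (hb j) hx) (hbx j)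
  refine ⟨(∏ j, C j) * (max 1 ‖x‖) ^ n, mul_pos (prod_pos fun j _ => hC0 j) (by positivity),
    fun α hα k hk ν => ?_⟩
  set t := (-ν).toNat with ht
  have h1 : ‖wt (q : ℂ) α b (x * (q : ℂ) ^ ν)‖ ≤
      (∏ j, C j) * (q ^ (n + 1) * (∏ j, ρ j) / ‖∏ j, b j‖) ^ t := by
    have e : q ^ (n + 1) * (∏ j, ρ j) / ‖∏ j, b j‖ = ∏ j, (q * ρ j / ‖b j‖) := by
      rw [prod_div_distrib, prod_mul_distrib, norm_prod]
      simp
    rw [wt, norm_prod, e, ← prod_pow, ← prod_mul_distrib]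
    refine prod_le_prod (fun _ _ => norm_nonneg _) fun j _ => ?_
    have h2 := hC j ν
    have e2 : ‖(-((q * ρ j * ‖x‖ : ℝ) : ℂ))‖ / ‖b j * x‖ = q * ρ j / ‖b j‖ := by
      have := hρ j
      rw [norm_neg, Complex.norm_real, Real.norm_of_nonneg (by positivity), norm_mul]
      have := hnb j
      field_simp
    rw [e2] at h2
    refine le_trans ?_ h2
    rw [norm_div, norm_div, mul_assoc (b j)]
    gcongr
    have e3 : -((q * ρ j * ‖x‖ : ℝ) : ℂ) * (q : ℂ) ^ ν = -((q * ρ j * ‖x‖ * q ^ ν : ℝ) : ℂ) := by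
      push_cast
      ring
    rw [e3]
    apply qp_norm_le hq0 hq1
    rw [norm_mul, norm_mul, norm_mul, norm_zpow, Complex.norm_real, Real.norm_of_nonneg hq0.le,
      ← mul_assoc]
    gcongr
    exact hα j
  have h2 : ‖x * (q : ℂ) ^ ν‖ ^ k ≤ (max 1 ‖x‖) ^ n * ((q ^ n)⁻¹) ^ t := by
    rw [norm_mul, mul_pow, norm_zpow, Complex.norm_real, Real.norm_of_nonneg hq0.le]
    gcongr
    · calc ‖x‖ ^ k ≤ (max 1 ‖x‖) ^ k := by gcongr; exact le_max_right _ _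
        _ ≤ _ := pow_le_pow_right₀ (le_max_left _ _) hk
    · rcases le_total 0 ν with h | h
      · have ht0 : t = 0 := by omega
        rw [ht0, pow_zero]
        exact pow_le_one₀ (by positivity) (zpow_le_one₀ hq0 hq1.le h)
      · have : ν = -(t : ℤ) := by omega
        rw [this, zpow_neg, zpow_natCast, ← inv_pow, ← inv_pow, ← pow_mul, ← pow_mul, mul_comm n t]
        exact pow_le_pow_right₀ ((one_le_inv₀ hq0).2 hq1.le) (Nat.mul_le_mul_left _ hk)
  have hCp : 0 ≤ ∏ j, C j := prod_nonneg fun j _ => (hC0 j).le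
  have hρp : 0 ≤ ∏ j, ρ j := prod_nonneg fun j _ => (hρ j).le
  calc _ ≤ ((∏ j, C j) * (q ^ (n + 1) * (∏ j, ρ j) / ‖∏ j, b j‖) ^ t) *
        ((max 1 ‖x‖) ^ n * ((q ^ n)⁻¹) ^ t) := by gcongr
    _ = (∏ j, C j) * (max 1 ‖x‖) ^ n *
        (q ^ (n + 1) * (∏ j, ρ j) / ‖∏ j, b j‖ * (q ^ n)⁻¹) ^ t := by rw [mul_pow]; ring
    _ = _ := by
      congr 2
      rw [pow_succ]
      field_simp

lemma norm_vandermonde_le {m : ℕ} (z : Fin m → ℂ) :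
    ‖∏ i, ∏ j ∈ Ioi i, (z j - z i)‖ ≤
      ∑ σ : Equiv.Perm (Fin m), ∏ i, ‖z i‖ ^ (σ i : ℕ) := by
  rw [← Matrix.det_vandermonde, ← Matrix.det_transpose, Matrix.det_apply']
  refine (norm_sum_le _ _).trans (sum_le_sum fun σ _ => ?_)
  rw [norm_mul, norm_prod]
  have : ‖(((Equiv.Perm.sign σ : ℤˣ) : ℤ) : ℂ)‖ = 1 := by
    rcases Int.units_eq_one_or (Equiv.Perm.sign σ) with h | h <;> simp [h]
  rw [this, one_mul]
  simp [Matrix.vandermonde_apply]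

/-- A summable majorant of the Gustafson summand, uniform in the polydisc `‖αⱼ‖ ≤ ρⱼ`. -/
lemma exists_majorant {n : ℕ} {q : ℝ} (hq0 : 0 < q) (hq1 : q < 1) {b X : Fin (n + 1) → ℂ}
    (hb : ∀ j, b j ≠ 0) (hX : ∀ i, X i ≠ 0) (hbX : ∀ i j (m : ℤ), b j * X i ≠ (q : ℂ) ^ m)
    {ρ : Fin (n + 1) → ℝ} (hρ : ∀ j, 0 < ρ j) (hbal : q * ∏ j, ρ j < ‖∏ j, b j‖) :
    ∃ v : (Fin n → ℤ) → ℝ, Summable v ∧ ∀ α : Fin (n + 1) → ℂ, (∀ j, ‖α j‖ ≤ ρ j) →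
      ∀ ν, ‖phi (q : ℂ) α b (fun i => X i * (q : ℂ) ^ mu ν i)‖ ≤ v ν := by
  choose C hC0 hC using fun i => wt_bound hq0 hq1 hb (hX i) (hbX i) hρ
  set r := q * (∏ j, ρ j) / ‖∏ j, b j‖ with hr
  have hρp : 0 < ∏ j, ρ j := prod_pos fun j _ => hρ j
  have hr0 : 0 ≤ r := by positivity
  have hr1 : r < 1 := (div_lt_one ((by positivity : 0 < q * ∏ j, ρ j).trans hbal)).2 hbal
  -- `∑ |νₖ|` is at most twice the total negative part of `mu ν`, hence the square root.
  set s := √r with hs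
  have hs0 : 0 ≤ s := Real.sqrt_nonneg _
  have hs1 : s < 1 := by rw [hs, Real.sqrt_lt' one_pos]; simpa using hr1
  refine ⟨fun ν => (∑ _σ : Equiv.Perm (Fin (n + 1)), ∏ i, C i) * ∏ k, s ^ (ν k).natAbs,
    (summable_pi_prod (summable_pow_natAbs hs0 hs1) (fun i => by positivity) n).mul_left _,
    fun α hα ν => ?_⟩
  rw [phi, norm_mul, norm_prod]
  refine (mul_le_mul_of_nonneg_left (norm_vandermonde_le _)
    (prod_nonneg fun _ _ => norm_nonneg _)).trans ?_
  beta_reduce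
  rw [mul_sum, sum_mul]
  refine sum_le_sum fun σ _ => ?_
  rw [← prod_mul_distrib]
  calc _ ≤ ∏ i, (C i * r ^ (-mu ν i).toNat) :=
        prod_le_prod (fun _ _ => by positivity) fun i _ =>
          hC i α hα (σ i) (Nat.lt_succ_iff.1 (σ i).2) (mu ν i)
    _ = (∏ i, C i) * r ^ ∑ i, (-mu ν i).toNat := by
        rw [prod_mul_distrib, prod_pow_eq_pow_sum]
    _ ≤ _ := by
        have hCp : 0 ≤ ∏ i, C i := prod_nonneg fun i _ => (hC0 i).le
        gcongr
        rw [prod_pow_eq_pow_sum, ← Real.sq_sqrt hr0, ← pow_mul]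
        exact pow_le_pow_of_le_one hs0 hs1.le (sum_natAbs_le ν)

/-! ### Termination of the bilateral series -/

lemma mu_of_lattice {n : ℕ} (N l : Fin (n + 1) → ℕ) (h : ∑ i, l i = ∑ i, N i) (i : Fin (n + 1)) :
    mu (fun k : Fin n => (l k.castSucc : ℤ) - N k.castSucc) i = (l i : ℤ) - N i := by
  refine Fin.lastCases ?_ (fun k => ?_) i
  · rw [mu_last, sum_sub_distrib]
    rw [Fin.sum_univ_castSucc, Fin.sum_univ_castSucc] at h
    have h' : (((∑ i : Fin n, l i.castSucc) + l (Fin.last n) : ℕ) : ℤ) =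
      (((∑ i : Fin n, N i.castSucc) + N (Fin.last n) : ℕ) : ℤ) := by rw [h]
    push_cast at h'
    linarith
  · rw [mu_castSucc]

/-- At `αⱼ = q^{Nⱼ}/Xⱼ` the bilateral series terminates, and is the sum over `|λ| = ∑ Nⱼ`
based at the point `(Xⱼ q^{-Nⱼ})`. -/
lemma tsum_terminating {n : ℕ} {q : ℂ} (hq : ‖q‖ < 1) (hq0 : q ≠ 0) {b X : Fin (n + 1) → ℂ}
    (hX : ∀ i, X i ≠ 0) (N : Fin (n + 1) → ℕ) :
    ∑' ν : Fin n → ℤ, phi q (fun j => q ^ N j / X j) b (fun i => X i * q ^ mu ν i) =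
      tsm q (fun i => X i / q ^ N i) b (∑ i, N i) := by
  classical
  set e : (Fin (n + 1) → ℕ) → (Fin n → ℤ) := fun l k => (l k.castSucc : ℤ) - N k.castSucc with he
  rw [tsum_eq_sum (s := (finAntidiagonal (n + 1) (∑ i, N i)).image e), sum_image, tsm]
  · refine sum_congr rfl fun l hl => ?_
    rw [mem_finAntidiagonal] at hl
    congr 1
    · funext j
      simp
    · funext i
      rw [he, mu_of_lattice N l hl, zpow_sub₀ hq0, zpow_natCast, zpow_natCast]
      ring
  · intro l hl l' hl' h
    rw [mem_coe, mem_finAntidiagonal] at hl hl'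
    funext i
    have h1 := mu_of_lattice N l hl i
    have h2 := mu_of_lattice N l' hl' i
    have h3 : mu (e l) i = mu (e l') i := by rw [h]
    simp only [he] at h3
    omega
  · intro ν hν
    -- A point outside the finite set has some `μᵢ < -Nᵢ`, where `(q αᵢ zᵢ)_∞ = 0`.
    have hneg : ∃ i, mu ν i + N i < 0 := by
      by_contra! hc
      refine hν (mem_image.2 ⟨fun i => (mu ν i + N i).toNat, ?_, ?_⟩)
      · rw [mem_finAntidiagonal]
        have : ((∑ i, (mu ν i + N i).toNat : ℕ) : ℤ) = ((∑ i, N i : ℕ) : ℤ) := by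
          rw [Nat.cast_sum, Nat.cast_sum, ← zero_add (∑ i, (N i : ℤ)), ← sum_mu ν,
            ← sum_add_distrib]
          exact sum_congr rfl fun i _ => Int.toNat_of_nonneg (hc i)
        exact_mod_cast this
      · funext k
        have := hc k.castSucc
        simp only [he]
        rw [Int.toNat_of_nonneg this, mu_castSucc]
        ring
    obtain ⟨i, hi⟩ := hneg
    rw [phi, prod_eq_zero (mem_univ i), zero_mul]
    rw [wt, prod_eq_zero (mem_univ i)]
    rw [qp_eq_zero hq (-(1 + N i + mu ν i)).toNat, zero_div]
    rw [← zpow_natCast, Int.toNat_of_nonneg (by omega), zpow_neg, zpow_add₀ hq0, zpow_add₀ hq0]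
    have := zpow_ne_zero (mu ν i) hq0
    have := hX i
    simp only [zpow_one, zpow_natCast]
    field_simp

lemma eval_terminating {n : ℕ} {q : ℂ} (hq : ‖q‖ < 1) (hq0 : q ≠ 0) {b X : Fin (n + 1) → ℂ}
    (hX : ∀ i, X i ≠ 0) (hb : ∀ i, b i ≠ 0) (hbX : ∀ i j (m : ℤ), b j * X i ≠ q ^ m)
    {α : Fin (n + 1) → ℂ} (hbal : ‖q‖ * ‖∏ j, α j‖ < ‖∏ j, b j‖)
    (hα : ∀ j, ∃ N : ℕ, α j = q ^ N / X j) :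
    ∑' ν : Fin n → ℤ, phi q α b (fun i => X i * q ^ mu ν i) = rhs q (∏ i, X i) α b X := by
  choose N hN using hα
  obtain rfl : α = fun j => q ^ N j / X j := funext hN
  rw [tsum_terminating hq hq0 hX]
  have hbp : 0 < ‖∏ j, b j‖ := norm_pos_iff.2 (prod_ne_zero_iff.2 fun j _ => hb j)
  rw [tsm_eq_rhs hq hq0 (fun i => div_ne_zero (hX i) (pow_ne_zero _ hq0)) hb ?_ ?_ N _ rfl]
  · congr 1
    · rw [prod_div_distrib, prod_pow_eq_pow_sum, div_mul_cancel₀ _ (pow_ne_zero _ hq0)]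
    · funext j
      simp
    · funext i
      rw [div_mul_cancel₀ _ (pow_ne_zero _ hq0)]
  · intro i j m h
    apply hbX i j (m + N i)
    rw [zpow_add₀ hq0, ← h, zpow_natCast, mul_assoc, div_mul_cancel₀ _ (pow_ne_zero _ hq0)]
  · simp only [inv_div]
    rw [norm_mul, norm_mul, norm_inv, ← div_eq_mul_inv]
    exact (div_lt_one hbp).2 hbal

/-! ### Analytic continuation in the parameters -/

lemma differentiable_update {m : ℕ} (α : Fin m → ℂ) (j k : Fin m) :
    Differentiable ℂ fun w => Function.update α j w k := by
  by_cases h : k = j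
  · subst h
    simp
  · simp [h]

lemma differentiable_phi {m : ℕ} {q : ℂ} (hq : ‖q‖ < 1) (α b z : Fin m → ℂ) (j : Fin m) :
    Differentiable ℂ fun w => phi q (Function.update α j w) b z := by
  unfold phi wt
  refine Differentiable.mul_const (Differentiable.fun_finsetProd fun i _ =>
    Differentiable.fun_finsetProd fun k _ => Differentiable.div_const ?_ _) _
  exact (qp_differentiable hq).comp
    (((differentiable_const q).mul (differentiable_update α j k)).mul_const _)

/-- The series is holomorphic in each `αⱼ` separately, in the disc given by the balancing
condition. -/
lemma differentiableOn_series {n : ℕ} {q : ℝ} (hq0 : 0 < q) (hq1 : q < 1) {b X : Fin (n + 1) → ℂ}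
    (hb : ∀ j, b j ≠ 0) (hX : ∀ i, X i ≠ 0) (hbX : ∀ i j (m : ℤ), b j * X i ≠ (q : ℂ) ^ m)
    {α : Fin (n + 1) → ℂ} (hα : ∀ j, α j ≠ 0) (j : Fin (n + 1)) {R : ℝ}
    (hR : R * (q * ‖∏ k ∈ univ \ {j}, α k‖) = ‖∏ k, b k‖) :
    DifferentiableOn ℂ (fun w => ∑' ν : Fin n → ℤ,
      phi (q : ℂ) (Function.update α j w) b (fun i => X i * (q : ℂ) ^ mu ν i)) (Metric.ball 0 R) := by
  have hq : ‖(q : ℂ)‖ < 1 := by simpa [abs_of_pos hq0] using hq1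
  have hc : 0 < ‖∏ k ∈ univ \ {j}, α k‖ := norm_pos_iff.2 (prod_ne_zero_iff.2 fun j _ => hα j)
  intro w hw
  rw [mem_ball_zero_iff] at hw
  obtain ⟨r, hwr, hrR⟩ := exists_between hw
  have hr0 : 0 < r := (norm_nonneg w).trans_lt hwr
  obtain ⟨v, hv, hv2⟩ := exists_majorant hq0 hq1 hb hX hbX
    (ρ := Function.update (fun k => ‖α k‖) j r)
    (fun k => by
      by_cases h : k = j
      · subst h; simpa using hr0
      · simpa [h] using hα k)
    (by
      rw [prod_update_of_mem (mem_univ j), ← hR, ← norm_prod]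
      calc q * (r * ‖∏ k ∈ univ \ {j}, α k‖) = r * (q * ‖∏ k ∈ univ \ {j}, α k‖) := by ring
        _ < _ := by gcongr)
  have h := Complex.differentiableOn_tsum_of_summable_norm hv
    (fun ν => (differentiable_phi hq α b (fun i => X i * (q : ℂ) ^ mu ν i) j).differentiableOn
      (s := Metric.ball 0 r)) Metric.isOpen_ball (fun ν w hw => hv2 _ (fun k => by
        rw [mem_ball_zero_iff] at hw
        by_cases h : k = j
        · subst h; simpa using hw.le
        · simp [h]) ν)
  exact (h.differentiableAt (Metric.isOpen_ball.mem_nhds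
    (mem_ball_zero_iff.2 hwr))).differentiableWithinAt

lemma differentiableOn_rhs {n : ℕ} {q : ℝ} (hq0 : 0 < q) (hq1 : q < 1) (d : ℂ)
    {b : Fin (n + 1) → ℂ} (X : Fin (n + 1) → ℂ)
    (hb : ∀ j, b j ≠ 0) {α : Fin (n + 1) → ℂ} (hα : ∀ j, α j ≠ 0) (j : Fin (n + 1)) {R : ℝ}
    (hR : R * (q * ‖∏ k ∈ univ \ {j}, α k‖) = ‖∏ k, b k‖) :
    DifferentiableOn ℂ (fun w => rhs (q : ℂ) d (Function.update α j w) b X) (Metric.ball 0 R) := by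
  have hq : ‖(q : ℂ)‖ < 1 := by simpa [abs_of_pos hq0] using hq1
  have hc : 0 < ‖∏ k ∈ univ \ {j}, α k‖ := norm_pos_iff.2 (prod_ne_zero_iff.2 fun j _ => hα j)
  have hbp : 0 < ‖∏ j, b j‖ := norm_pos_iff.2 (prod_ne_zero_iff.2 fun j _ => hb j)
  have hp : Differentiable ℂ fun w => ∏ k, Function.update α j w k :=
    Differentiable.fun_finsetProd fun k _ => differentiable_update α j k
  have hd := qp_differentiable hq
  unfold rhs
  refine DifferentiableOn.mul_const (DifferentiableOn.mul (DifferentiableOn.const_mul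
    (DifferentiableOn.div ?_ ?_ ?_) _) ?_) _
  · exact ((hd.comp ((hp.const_mul _).mul_const _)).mul_const _).differentiableOn
  · exact (hd.comp ((hp.const_mul _).mul_const _)).differentiableOn
  · intro w hw
    rw [mem_ball_zero_iff] at hw
    apply qp_ne_zero_of_norm_lt hq
    rw [prod_update_of_mem (mem_univ j), norm_mul, norm_mul, norm_mul, norm_inv,
      ← div_eq_mul_inv, div_lt_one hbp, ← hR, Complex.norm_real, Real.norm_of_nonneg hq0.le]
    calc q * (‖w‖ * ‖∏ k ∈ univ \ {j}, α k‖) = ‖w‖ * (q * ‖∏ k ∈ univ \ {j}, α k‖) := by ring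
      _ < _ := by gcongr
  · exact (Differentiable.fun_finsetProd fun i _ => Differentiable.fun_finsetProd fun k _ =>
      hd.comp (((differentiable_update α j i).const_mul _).mul_const _)).differentiableOn

/-- The evaluation, by freeing the `αⱼ` from the progressions `q^ℕ/Xⱼ` one index at a time: these
points accumulate at `0`, inside the disc of holomorphy, so the identity theorem applies. -/
lemma eval_of_finset {n : ℕ} {q : ℝ} (hq0 : 0 < q) (hq1 : q < 1) {b X : Fin (n + 1) → ℂ}
    (hb : ∀ j, b j ≠ 0) (hX : ∀ i, X i ≠ 0) (hbX : ∀ i j (m : ℤ), b j * X i ≠ (q : ℂ) ^ m)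
    (s : Finset (Fin (n + 1))) :
    ∀ α : Fin (n + 1) → ℂ, (∀ j, α j ≠ 0) → q * ‖∏ j, α j‖ < ‖∏ j, b j‖ →
      (∀ j, j ∉ s → ∃ N : ℕ, α j = (q : ℂ) ^ N / X j) →
      ∑' ν : Fin n → ℤ, phi (q : ℂ) α b (fun i => X i * (q : ℂ) ^ mu ν i) =
        rhs (q : ℂ) (∏ i, X i) α b X := by
  have hq : ‖(q : ℂ)‖ < 1 := by simpa [abs_of_pos hq0] using hq1
  have hqn : ‖(q : ℂ)‖ = q := by simp [abs_of_pos hq0]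
  have hqc : (q : ℂ) ≠ 0 := by exact_mod_cast hq0.ne'
  have hbp : 0 < ‖∏ j, b j‖ := norm_pos_iff.2 (prod_ne_zero_iff.2 fun j _ => hb j)
  induction s using Finset.induction_on with
  | empty =>
    intro α _ hbal h
    exact eval_terminating hq hqc hX hb hbX (by rwa [hqn]) fun j => h j (by simp)
  | insert j s hj ih =>
    intro α hα hbal h
    have hc : 0 < ‖∏ k ∈ univ \ {j}, α k‖ := norm_pos_iff.2 (prod_ne_zero_iff.2 fun j _ => hα j)
    set R := ‖∏ k, b k‖ / (q * ‖∏ k ∈ univ \ {j}, α k‖) with hRdef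
    have hR : R * (q * ‖∏ k ∈ univ \ {j}, α k‖) = ‖∏ k, b k‖ := by
      rw [hRdef]; field_simp
    have hR0 : 0 < R := by positivity
    have key := ((differentiableOn_series hq0 hq1 hb hX hbX hα j hR).analyticOnNhd
      Metric.isOpen_ball).eqOn_of_preconnected_of_frequently_eq
      ((differentiableOn_rhs hq0 hq1 (∏ i, X i) X hb hα j hR).analyticOnNhd Metric.isOpen_ball)
      (convex_ball (0 : ℂ) R).isPreconnected (Metric.mem_ball_self hR0) ?_
    · have hw : α j ∈ Metric.ball (0 : ℂ) R := by
        rw [mem_ball_zero_iff, hRdef, lt_div_iff₀ (by positivity)]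
        refine lt_of_eq_of_lt ?_ hbal
        rw [← Function.update_eq_self j α, prod_update_of_mem (mem_univ j), norm_mul]
        simp only [Function.update_eq_self]
        ring
      simpa using key hw
    · have ht0 : Tendsto (fun N : ℕ => (q : ℂ) ^ N / X j) atTop (𝓝 0) := by
        simpa using (tendsto_pow_atTop_nhds_zero_of_norm_lt_one hq).div_const (X j)
      have hne : ∀ N : ℕ, (q : ℂ) ^ N / X j ≠ 0 := fun N => div_ne_zero (pow_ne_zero _ hqc) (hX j)
      have ht : Tendsto (fun N : ℕ => (q : ℂ) ^ N / X j) atTop (𝓝[≠] 0) :=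
        tendsto_nhdsWithin_iff.2 ⟨ht0, Eventually.of_forall hne⟩
      refine ht.frequently (Eventually.frequently ?_)
      filter_upwards [ht0 (Metric.ball_mem_nhds 0 hR0)] with N hN
      rw [Set.mem_preimage, mem_ball_zero_iff] at hN
      refine ih _ (fun k => ?_) ?_ fun k hk => ?_
      · by_cases hkj : k = j
        · subst hkj; simpa using hne N
        · simpa [hkj] using hα k
      · rw [prod_update_of_mem (mem_univ j), norm_mul, ← hR]
        calc _ = ‖(q : ℂ) ^ N / X j‖ * (q * ‖∏ k ∈ univ \ {j}, α k‖) := by ring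
          _ < _ := by gcongr
      · by_cases hkj : k = j
        · subst hkj; exact ⟨N, by simp⟩
        · simpa [hkj] using h k (by simp [hkj, hk])

/-! ### Gustafson formula -/

lemma gz_eq {n : ℕ} {q : ℂ} (hq0 : q ≠ 0) (d : ℂ) (x : Fin n → ℂ) (ν : Fin n → ℤ) :
    gz q d x ν = fun i =>
      (Fin.snoc x (d * (∏ k, x k)⁻¹) : Fin (n + 1) → ℂ) i * q ^ mu ν i := by
  funext i
  refine Fin.lastCases ?_ (fun k => ?_) i
  · have : ∏ k, q ^ ν k = q ^ ∑ k, ν k := by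
      induction (univ : Finset (Fin n)) using Finset.induction_on with
      | empty => simp
      | insert k s hk ih => rw [prod_insert hk, sum_insert hk, ih, zpow_add₀ hq0]
    rw [gz, mu_last, Fin.snoc_last, Fin.snoc_last, prod_mul_distrib, this, mul_inv, zpow_neg]
    ring
  · rw [gz, mu_castSucc, Fin.snoc_castSucc, Fin.snoc_castSucc]

lemma gTerm_eq {n : ℕ} {q : ℂ} (hq0 : q ≠ 0) (d : ℂ) (a b : Fin (n + 1) → ℂ) (x : Fin n → ℂ)
    (ν : Fin n → ℤ) :
    gTerm q d a b x ν = phi q (fun j => (a j)⁻¹) b (fun i =>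
      (Fin.snoc x (d * (∏ k, x k)⁻¹) : Fin (n + 1) → ℂ) i * q ^ mu ν i) := by
  rw [gTerm, gz_eq hq0]
  rfl

/-- Separation of the last variable in the theta factor; each factor `y θ(xᵢ/y)` is turned into
`-xᵢ θ(y/xᵢ)`, whence the sign. -/
lemma thPart_snoc {n : ℕ} {q : ℂ} (hq : ‖q‖ < 1) (b : Fin (n + 1) → ℂ) {x : Fin n → ℂ}
    (hx : ∀ i, x i ≠ 0) {y : ℂ} (hy : y ≠ 0) :
    thPart q b (Fin.snoc x y : Fin (n + 1) → ℂ) =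
      (-1) ^ n * ((∏ i, ∏ j ∈ Ioi i, x j * th q (x i / x j)) /
        ∏ i : Fin n, ∏ j, th q (b j * x i)) *
      ((∏ i, x i * th q (y * (x i)⁻¹)) / ∏ j, th q (b j * y)) := by
  rw [thPart, prod_Ioi_castSucc, Fin.prod_univ_castSucc]
  simp only [Fin.snoc_castSucc, Fin.snoc_last]
  have h : ∏ i : Fin n, y * th q (x i / y) = (-1) ^ n * ∏ i, x i * th q (y * (x i)⁻¹) := by
    have e : ((-1 : ℂ)) ^ n = ∏ _i : Fin n, (-1 : ℂ) := by simp
    rw [e, ← prod_mul_distrib]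
    refine prod_congr rfl fun i _ => ?_
    have hxi := hx i
    have e2 : x i / y = (y * (x i)⁻¹)⁻¹ := by field_simp
    rw [e2, th_inv hq (mul_ne_zero hy (inv_ne_zero hxi))]
    field_simp
  rw [h, mul_div_mul_comm, mul_div_assoc]
  ring

/-- Gustafson's `A_n` summation formula (Theorem 5.2). -/
theorem gustafson_An_summation
    (q : ℝ) (hq0 : 0 < q) (hq1 : q < 1) (n : ℕ) (hn : 1 ≤ n)
    (a b : Fin (n + 1) → ℂ) (ha : ∀ i, a i ≠ 0) (hb : ∀ i, b i ≠ 0)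
    (d : ℂ) (hd : d ≠ 0)
    (hbal : (q : ℝ) < ‖(∏ i, a i) * ∏ i, b i‖)
    (x : Fin n → ℂ) (hx : ∀ i, x i ≠ 0)
    (hxb : ∀ (i : Fin n) (j : Fin (n + 1)), ∀ m : ℤ, x i * b j ≠ (q : ℂ) ^ m)
    (hdb : ∀ j : Fin (n + 1), ∀ m : ℤ, d * (∏ k, x k)⁻¹ * b j ≠ (q : ℂ) ^ m) :
    Summable (gTerm (q : ℂ) d a b x) ∧
      gSum (q : ℂ) d a b x =
        (1 - (q : ℂ)) ^ n * qp (q : ℂ) (q : ℂ) ^ n *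
            (qp (q : ℂ) ((q : ℂ) * (∏ j, a j)⁻¹ * d) *
              qp (q : ℂ) ((q : ℂ) * (∏ j, b j)⁻¹ * d⁻¹) /
              qp (q : ℂ) ((q : ℂ) * (∏ j, a j)⁻¹ * (∏ j, b j)⁻¹)) *
            (∏ i, ∏ j, qp (q : ℂ) ((q : ℂ) * (a i)⁻¹ * (b j)⁻¹)) * (-1 : ℂ) ^ n *
          ((∏ i, ∏ j ∈ Finset.Ioi i, x j * th (q : ℂ) (x i / x j)) /
            ∏ i : Fin n, ∏ j : Fin (n + 1), th (q : ℂ) (b j * x i)) *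
          ((∏ i, x i * th (q : ℂ) (d * (∏ k, x k)⁻¹ * (x i)⁻¹)) /
            ∏ j : Fin (n + 1), th (q : ℂ) (b j * d * (∏ k, x k)⁻¹)) := by
  have hq : ‖(q : ℂ)‖ < 1 := by simpa [abs_of_pos hq0] using hq1
  have hqc : (q : ℂ) ≠ 0 := by exact_mod_cast hq0.ne'
  have hxp : ∏ k, x k ≠ 0 := prod_ne_zero_iff.2 fun k _ => hx k
  have hy : d * (∏ k, x k)⁻¹ ≠ 0 := mul_ne_zero hd (inv_ne_zero hxp)
  set X : Fin (n + 1) → ℂ := Fin.snoc x (d * (∏ k, x k)⁻¹) with hXdef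
  have hX : ∀ i, X i ≠ 0 := by
    refine Fin.lastCases ?_ (fun k => ?_)
    · rw [hXdef, Fin.snoc_last]; exact hy
    · rw [hXdef, Fin.snoc_castSucc]; exact hx k
  have hbX : ∀ i j (m : ℤ), b j * X i ≠ (q : ℂ) ^ m := by
    refine Fin.lastCases ?_ (fun k => ?_)
    · intro j m
      rw [hXdef, Fin.snoc_last, mul_comm]; exact hdb j m
    · intro j m
      rw [hXdef, Fin.snoc_castSucc, mul_comm]; exact hxb k j m
  have hXp : ∏ i, X i = d := by
    rw [Fin.prod_univ_castSucc]
    simp only [hXdef, Fin.snoc_castSucc, Fin.snoc_last]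
    field_simp
  have hα : ∀ j, (a j)⁻¹ ≠ 0 := fun j => inv_ne_zero (ha j)
  have hAp : 0 < ‖∏ j, a j‖ := norm_pos_iff.2 (prod_ne_zero_iff.2 fun j _ => ha j)
  have hbal' : q * ‖∏ j, (a j)⁻¹‖ < ‖∏ j, b j‖ := by
    rw [prod_inv_distrib, norm_inv, ← div_eq_mul_inv, div_lt_iff₀ hAp, mul_comm, ← norm_mul]
    exact hbal
  have hterm : gTerm (q : ℂ) d a b x =
      fun ν => phi (q : ℂ) (fun j => (a j)⁻¹) b (fun i => X i * (q : ℂ) ^ mu ν i) :=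
    funext fun ν => gTerm_eq hqc d a b x ν
  constructor
  · obtain ⟨v, hv, hv2⟩ := exists_majorant hq0 hq1 hb hX hbX (ρ := fun j => ‖(a j)⁻¹‖)
      (fun j => norm_pos_iff.2 (hα j)) (by rwa [← norm_prod])
    rw [hterm]
    exact Summable.of_norm_bounded hv (hv2 _ fun j => le_rfl)
  · rw [gSum, hterm, eval_of_finset hq0 hq1 hb hX hbX univ _ hα hbal' (fun j hj => absurd (mem_univ j) hj),
      hXp, rhs, hXdef, thPart_snoc hq b hx hy, prod_inv_distrib]
    simp only [← mul_assoc]
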